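/- Greedy 2k-approximation for k-local valuations: Let 1 ≤ k ≤ m be integers and let v_1, …, v_n be normalized, nondecreasing, k-local valuations on subsets of [m]. Then there exists a collection {S_i}_{i∈[n]} of pairwise disjoint subsets of [m], each of size at most k, such that Σ_{i=1}^{n} v_i(S_i) ≥ (1/(2k)) · max over all partitions {T_i}_{i∈[n]} of [m] of Σ_{i=1}^{n} v_i(T_i). -/

import Mathlib

open Finset

/-- A valuation on `[m]`: normalized, nonnegative and nondecreasing. -/
def IsValuation {m : ℕ} (v : Finset (Fin m) → ℝ) : Prop :=
  v ∅ = 0 ∧ (∀ S, 0 ≤ v S) ∧ ∀ S T : Finset (Fin m), S ⊆ T → v S ≤ v T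

/-- A valuation is `k`-local if some bundle `T` of size `k` captures its value up to
an additive error of `v([m]) / (2m²)`. -/
def IsKLocal {m : ℕ} (k : ℕ) (v : Finset (Fin m) → ℝ) : Prop :=
  ∃ T : Finset (Fin m), T.card = k ∧
    ∀ S : Finset (Fin m), v S - (1 / (2 * (m : ℝ) ^ 2)) * v Finset.univ ≤ v (S ∩ T)

/-- `T` is a partition of `[m]` indexed by `[n]`. -/
def IsPartitionFam {m n : ℕ} (T : Fin n → Finset (Fin m)) : Prop :=
  (∀ i j : Fin n, i ≠ j → Disjoint (T i) (T j)) ∧ ∀ x : Fin m, ∃ i : Fin n, x ∈ T i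

/-!
Truncate a welfare-maximizing disjoint family `T` to the bundles `T i ∩ A i`, where `A i` captures
`v i` up to an additive error `ε * v i univ`. Handing all items to one agent is itself a disjoint
family, so this error is at most `ε` times the optimum; only nonempty `T i` lose anything, and at
most `|α|` of them are nonempty. For `k`-local valuations `ε = 1 / (2m²)`, so a fraction
`1 - 1 / (2m) ≥ 1 / 2 ≥ 1 / (2k)` survives. Truncating an optimum replaces the greedy construction
that the name of the theorem refers to.
-/

section DisjointFamilies

open scoped Function

variable {ι α R : Type*}

theorem pairwise_disjoint_update_bot [DecidableEq ι] [PartialOrder α] [OrderBot α]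
    (i : ι) (a : α) : Pairwise (Disjoint on Function.update (fun _ => ⊥) i a) := by
  intro j l hjl
  rcases eq_or_ne j i with rfl | hji
  · simp [Function.onFun, hjl.symm]
  · simp [Function.onFun, hji]

theorem sum_card_le_card_of_pairwise_disjoint [Fintype ι] [Fintype α] {T : ι → Finset α}
    (hT : Pairwise (Disjoint on T)) : ∑ i, (T i).card ≤ Fintype.card α := by
  classical
  rw [← card_biUnion fun i _ j _ hij => hT hij]
  exact card_le_univ _

theorem apply_le_of_forall_pairwise_disjoint_sum_le [Fintype ι] [AddCommMonoid R] [Preorder R]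
    {v : ι → Finset α → R} (h_empty : ∀ i, v i ∅ = 0) {M : R}
    (hM : ∀ T : ι → Finset α, Pairwise (Disjoint on T) → ∑ i, v i (T i) ≤ M)
    (i : ι) (S : Finset α) : v i S ≤ M := by
  classical
  let T : ι → Finset α := Function.update (fun _ => ⊥) i S
  have h_sum : ∑ j, v j (T j) = v i S := by
    rw [Fintype.sum_eq_single i fun j hj => by simp [T, hj, h_empty]]
    simp only [T, Function.update_self]
  exact h_sum.ge.trans (hM T (pairwise_disjoint_update_bot i S))

end DisjointFamilies

section Truncation

open scoped Function

variable {ι α R : Type*} [Fintype α] [DecidableEq α]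
  [CommRing R] [LinearOrder R] [IsStrictOrderedRing R]

theorem sub_card_mul_le_apply_inter {v : Finset α → R} {A : Finset α} {ε M : R}
    (hε : 0 ≤ ε) (h_empty : v ∅ = 0) (hM_nonneg : 0 ≤ M) (hM : v univ ≤ M)
    (h_local : ∀ S, v S - ε * v univ ≤ v (S ∩ A)) (S : Finset α) :
    v S - S.card * (ε * M) ≤ v (S ∩ A) := by
  rcases S.eq_empty_or_nonempty with rfl | hS
  · simp [h_empty]
  · have h_card : (1 : R) ≤ S.card := mod_cast hS.card_pos
    calc v S - S.card * (ε * M) ≤ v S - ε * M :=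
          sub_le_sub_left (le_mul_of_one_le_left (mul_nonneg hε hM_nonneg) h_card) _
      _ ≤ v S - ε * v univ := sub_le_sub_left (mul_le_mul_of_nonneg_left hM hε) _
      _ ≤ v (S ∩ A) := h_local S

theorem one_sub_card_mul_mul_sum_le_sum_inter [Fintype ι] {v : ι → Finset α → R}
    {A T : ι → Finset α} {ε : R} (hε : 0 ≤ ε) (h_empty : ∀ i, v i ∅ = 0)
    (h_nonneg : ∀ i S, 0 ≤ v i S)
    (h_local : ∀ i S, v i S - ε * v i univ ≤ v i (S ∩ A i))
    (hT : Pairwise (Disjoint on T))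
    (hT_max : ∀ T' : ι → Finset α, Pairwise (Disjoint on T') →
      ∑ i, v i (T' i) ≤ ∑ i, v i (T i)) :
    (1 - Fintype.card α * ε) * ∑ i, v i (T i) ≤ ∑ i, v i (T i ∩ A i) := by
  set opt := ∑ i, v i (T i)
  have h_opt : 0 ≤ opt := sum_nonneg fun i _ => h_nonneg i (T i)
  have h_univ (i : ι) : v i univ ≤ opt :=
    apply_le_of_forall_pairwise_disjoint_sum_le h_empty hT_max i univ
  have h_card : ∑ i, ((T i).card : R) ≤ Fintype.card α :=
    mod_cast sum_card_le_card_of_pairwise_disjoint hT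
  calc (1 - Fintype.card α * ε) * opt = opt - Fintype.card α * (ε * opt) := by ring
    _ ≤ opt - (∑ i, ((T i).card : R)) * (ε * opt) :=
        sub_le_sub_left (mul_le_mul_of_nonneg_right h_card (mul_nonneg hε h_opt)) _
    _ = ∑ i, (v i (T i) - (T i).card * (ε * opt)) := by rw [sum_sub_distrib, sum_mul]
    _ ≤ ∑ i, v i (T i ∩ A i) := sum_le_sum fun i _ =>
        sub_card_mul_le_apply_inter hε (h_empty i) h_opt (h_univ i) (h_local i) (T i)

theorem greedy_two_k_approx_general [Fintype ι] {k : ℕ} {v : ι → Finset α → R} {ε : R}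
    (hε : 0 ≤ ε) (h_empty : ∀ i, v i ∅ = 0) (h_nonneg : ∀ i S, 0 ≤ v i S)
    (h_local : ∀ i, ∃ A : Finset α, A.card ≤ k ∧ ∀ S, v i S - ε * v i univ ≤ v i (S ∩ A)) :
    ∃ S : ι → Finset α, Pairwise (Disjoint on S) ∧ (∀ i, (S i).card ≤ k) ∧
      ∀ T : ι → Finset α, Pairwise (Disjoint on T) →
        (1 - Fintype.card α * ε) * ∑ i, v i (T i) ≤ ∑ i, v i (S i) := by
  choose A hA_card hA_local using h_local
  obtain ⟨T, hT, hT_max⟩ := Set.exists_max_image {T : ι → Finset α | Pairwise (Disjoint on T)}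
    (fun T => ∑ i, v i (T i)) (Set.toFinite _) ⟨fun _ => ∅, fun _ _ _ => disjoint_empty_left _⟩
  refine ⟨fun i => T i ∩ A i, fun i j hij => (hT hij).mono inter_subset_left inter_subset_left,
    fun i => (card_le_card inter_subset_right).trans (hA_card i), fun T' hT' => ?_⟩
  rcases le_total 0 (1 - Fintype.card α * ε) with h_factor | h_factor
  · exact (mul_le_mul_of_nonneg_left (hT_max T' hT') h_factor).trans
      (one_sub_card_mul_mul_sum_le_sum_inter hε h_empty h_nonneg hA_local hT hT_max)
  · exact (mul_nonpos_of_nonpos_of_nonneg h_factor (sum_nonneg fun i _ => h_nonneg i (T' i))).trans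
      (sum_nonneg fun i _ => h_nonneg i (T i ∩ A i))

end Truncation

theorem one_div_two_mul_le_one_sub {R : Type*} [Field R] [LinearOrder R] [IsStrictOrderedRing R]
    {k m : R} (hk : 1 ≤ k) (hm : 1 ≤ m) :
    1 / (2 * k) ≤ 1 - m * (1 / (2 * m ^ 2)) := by
  calc 1 / (2 * k) ≤ 1 / 2 := by gcongr; linarith
    _ = 1 - 1 / 2 := by norm_num
    _ ≤ 1 - 1 / (2 * m) := by gcongr; linarith
    _ = 1 - m * (1 / (2 * m ^ 2)) := by field_simp

/-- Greedy `2k`-approximation for `k`-local valuations. -/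
theorem greedy_two_k_approx (m n k : ℕ) (hk1 : 1 ≤ k) (hkm : k ≤ m)
    (v : Fin n → Finset (Fin m) → ℝ)
    (hval : ∀ i, IsValuation (v i)) (hloc : ∀ i, IsKLocal k (v i)) :
    ∃ S : Fin n → Finset (Fin m),
      (∀ i j : Fin n, i ≠ j → Disjoint (S i) (S j)) ∧
      (∀ i, (S i).card ≤ k) ∧
      ∀ T : Fin n → Finset (Fin m), IsPartitionFam T →
        (1 / (2 * (k : ℝ))) * (∑ i : Fin n, v i (T i)) ≤ ∑ i : Fin n, v i (S i) := by
  obtain ⟨S, hS_disj, hS_card, hS⟩ := greedy_two_k_approx_general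
    (ε := 1 / (2 * (m : ℝ) ^ 2)) (by positivity) (fun i => (hval i).1) (fun i => (hval i).2.1)
    (fun i => (hloc i).imp fun _ hA => ⟨hA.1.le, hA.2⟩)
  refine ⟨S, fun _ _ hij => hS_disj hij, hS_card, fun T hT => ?_⟩
  calc 1 / (2 * (k : ℝ)) * ∑ i, v i (T i)
      ≤ (1 - m * (1 / (2 * (m : ℝ) ^ 2))) * ∑ i, v i (T i) :=
        mul_le_mul_of_nonneg_right
          (one_div_two_mul_le_one_sub (mod_cast hk1) (mod_cast hk1.trans hkm))
          (sum_nonneg fun i _ => (hval i).2.1 (T i))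
    _ ≤ ∑ i, v i (S i) := by simpa only [Fintype.card_fin] using hS T fun i j => hT.1 i j
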